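/- arXiv:1706.06477 — 2 statements merged into one kernel-verified Lean document; each statement's English description precedes it below -/
import Mathlib

section
/- For every integer n ≥ 0, consider the det-twisted representation of O(3) on the space H_n of real harmonic homogeneous polynomials of degree n in three variables, in which g ∈ O(3) acts by (g·p)(x) = det(g)·p(g⁻¹x). Its restriction to the embedded subgroup O(2) is equivalent to the direct sum E^{0−} ⊕ E^1 ⊕ E^2 ⊕ ⋯ ⊕ E^n. -/
/-!
Write `w = x + iy`. For `m ≤ n` there is a polynomial in `z` and `x² + y²`, homogeneous of degree
`n - m` and monic in `z`, whose product with `Re (c w^m)` is harmonic for every complex number `c`: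
its coefficients make the Laplacian telescope. That factor is `O(2)`-invariant, so the products
transform like `Re (c w^m)`, and in a coordinate on the coefficients `c` that absorbs the
determinant they form a copy of `E^m` for `m ≥ 1` and of `E^{0−}` for `m = 0`.

The resulting map `E^{0−} ⊕ E^1 ⊕ ⋯ ⊕ E^n → H_n` is injective: along the isotropic curve
`(t, -it, 1)` the invariant factors become `1` and `Re (c w^m)` becomes `2^(m-1) c t^m` for `m ≥ 1`,
so every coordinate can be read off a polynomial in `t`. It is surjective because a harmonic
polynomial is determined by its coefficients with `z`-exponent `0` or `1`, whence
`dim H_n ≤ (n + 1) + n`.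
-/

open Matrix MvPolynomial

/-- The orthogonal representation `E^m` of `O(2)` on `ℝ²`, determined by sending the rotation
matrix `R_φ = [[cos φ, −sin φ],[sin φ, cos φ]]` to `R_{mφ}` and the reflection matrix
`S_φ = [[cos φ, sin φ],[sin φ, −cos φ]]` to `S_{mφ}`.  (For `k ∈ O(2)` the first column of `k`
is `(cos φ, sin φ)ᵀ`, read here as the complex number `e^{iφ}`, and `det k` distinguishes
rotations from reflections.) -/
noncomputable def Erep (m : ℕ) (k : Matrix.orthogonalGroup (Fin 2) ℝ) :
    Matrix (Fin 2) (Fin 2) ℝ :=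
  let w : ℂ := (⟨(k : Matrix (Fin 2) (Fin 2) ℝ) 0 0, (k : Matrix (Fin 2) (Fin 2) ℝ) 1 0⟩ : ℂ) ^ m
  let ε : ℝ := ((k : Matrix (Fin 2) (Fin 2) ℝ)).det
  !![w.re, -ε * w.im; w.im, ε * w.re]

/-- A 2×2 matrix acting on `ℝ × ℝ`. -/
def apply2 (M : Matrix (Fin 2) (Fin 2) ℝ) (v : ℝ × ℝ) : ℝ × ℝ :=
  (M 0 0 * v.1 + M 0 1 * v.2, M 1 0 * v.1 + M 1 1 * v.2)

/-- The Laplacian on real polynomials in three variables. -/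
noncomputable def laplacian : MvPolynomial (Fin 3) ℝ →ₗ[ℝ] MvPolynomial (Fin 3) ℝ :=
  ∑ i : Fin 3, ((MvPolynomial.pderiv i).toLinearMap ∘ₗ (MvPolynomial.pderiv i).toLinearMap)

/-- `H_n`: the space of harmonic homogeneous polynomials of degree `n` in three real variables. -/
noncomputable def harmonicHomog (n : ℕ) : Submodule ℝ (MvPolynomial (Fin 3) ℝ) :=
  MvPolynomial.homogeneousSubmodule (Fin 3) ℝ n ⊓ LinearMap.ker laplacian

/-- Substitution `p(x) ↦ p(Ax)` of the linear change of variables given by a matrix `A`. -/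
noncomputable def matrixSubst (A : Matrix (Fin 3) (Fin 3) ℝ) :
    MvPolynomial (Fin 3) ℝ →ₐ[ℝ] MvPolynomial (Fin 3) ℝ :=
  MvPolynomial.aeval (fun i => ∑ j : Fin 3, A i j • MvPolynomial.X j)

/-- Embedding of a 2×2 matrix into 3×3 matrices as the block-diagonal matrix `diag(k, 1)`. -/
def embed23 (k : Matrix (Fin 2) (Fin 2) ℝ) : Matrix (Fin 3) (Fin 3) ℝ :=
  !![k 0 0, k 0 1, 0; k 1 0, k 1 1, 0; 0, 0, 1]


namespace HarmonicBranching

/-! ### The Laplacian -/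

lemma laplacian_apply (p : MvPolynomial (Fin 3) ℝ) :
    laplacian p = pderiv 0 (pderiv 0 p) + pderiv 1 (pderiv 1 p) + pderiv 2 (pderiv 2 p) := by
  simp [laplacian, Fin.sum_univ_three]

lemma laplacian_mul (p q : MvPolynomial (Fin 3) ℝ) :
    laplacian (p * q) =
      laplacian p * q + 2 * ∑ i, pderiv i p * pderiv i q + p * laplacian q := by
  simp only [laplacian_apply, Fin.sum_univ_three, pderiv_mul, map_add]
  ring

lemma mem_harmonicHomog {n : ℕ} {p : MvPolynomial (Fin 3) ℝ} :
    p ∈ harmonicHomog n ↔ p.IsHomogeneous n ∧ laplacian p = 0 := Iff.rfl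

/-- The squared distance `x² + y²` to the axis fixed by the embedded `O(2)`. -/
noncomputable def radSq : MvPolynomial (Fin 3) ℝ := X 0 ^ 2 + X 1 ^ 2

lemma isHomogeneous_radSq : radSq.IsHomogeneous 2 :=
  (isHomogeneous_X_pow 0 2).add (isHomogeneous_X_pow 1 2)

lemma pderiv_zero_radSq : pderiv 0 radSq = 2 * X 0 := by simp [radSq]

lemma pderiv_one_radSq : pderiv 1 radSq = 2 * X 1 := by simp [radSq]

lemma pderiv_two_radSq : pderiv 2 radSq = 0 := by simp [radSq]

lemma laplacian_radSq_pow (k : ℕ) :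
    laplacian (radSq ^ k) = (4 * k ^ 2 : ℝ) • radSq ^ (k - 1) := by
  have pderiv_two (i : Fin 3) : pderiv i (2 : MvPolynomial (Fin 3) ℝ) = 0 :=
    pderiv_C (a := (2 : ℝ))
  have radSq_eq : radSq = X 0 ^ 2 + X 1 ^ 2 := rfl
  simp only [laplacian_apply, pderiv_pow, pderiv_mul, pderiv_zero_radSq, pderiv_one_radSq,
    pderiv_two_radSq, pderiv_two, pderiv_X_self, Derivation.map_natCast, smul_eq_C_mul, map_mul,
    map_pow, map_natCast, map_ofNat, mul_zero, map_zero]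
  rcases k with _ | _ | k
  · simp
  · simpa using by ring
  · simp only [Nat.add_sub_cancel]
    push_cast
    linear_combination -4 * (k + 2) * (k + 1) * radSq ^ k * radSq_eq

lemma laplacian_mul_radSq_pow {m : ℕ} {h : MvPolynomial (Fin 3) ℝ} (hom : h.IsHomogeneous m)
    (harm : laplacian h = 0) (planar : pderiv 2 h = 0) (k : ℕ) :
    laplacian (h * radSq ^ k) = (4 * k * (k + m) : ℝ) • (h * radSq ^ (k - 1)) := by
  have euler : X 0 * pderiv 0 h + X 1 * pderiv 1 h = (m : MvPolynomial (Fin 3) ℝ) * h := by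
    simpa [Fin.sum_univ_three, planar] using hom.sum_X_mul_pderiv
  rw [laplacian_mul, harm, laplacian_radSq_pow]
  simp only [Fin.sum_univ_three, pderiv_pow, pderiv_zero_radSq, pderiv_one_radSq, planar,
    smul_eq_C_mul, map_mul, map_add, map_pow, map_natCast, map_ofNat]
  linear_combination 4 * k * radSq ^ (k - 1) * euler

lemma laplacian_mul_radSq_pow_mul_X_two_pow {m : ℕ} {h : MvPolynomial (Fin 3) ℝ}
    (hom : h.IsHomogeneous m) (harm : laplacian h = 0) (planar : pderiv 2 h = 0) (k l : ℕ) :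
    laplacian (h * radSq ^ k * X 2 ^ l) =
      (4 * k * (k + m) : ℝ) • (h * radSq ^ (k - 1) * X 2 ^ l) +
        (l * (l - 1 : ℕ) : ℝ) • (h * radSq ^ k * X 2 ^ (l - 2)) := by
  have pderiv_two : pderiv 2 (h * radSq ^ k) = 0 := by
    simp [planar, pderiv_two_radSq]
  have laplacian_X_pow : laplacian (X 2 ^ l) = (l * (l - 1 : ℕ) : ℝ) • X 2 ^ (l - 2) := by
    simp [laplacian_apply, smul_eq_C_mul, Nat.sub_sub, mul_assoc]
  have cross : ∑ i, pderiv i (h * radSq ^ k) * pderiv i (X 2 ^ l) = 0 := by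
    rw [Fin.sum_univ_three, pderiv_two]
    simp
  rw [laplacian_mul, laplacian_mul_radSq_pow hom harm planar, laplacian_X_pow, cross]
  simp

/-! ### Axial factors -/

/-- Coefficients of `axial`. They vanish for `N < 2 * k`, and `axialCoeff_succ` is the recursion
that makes the Laplacian of `h * axial m N` telescope for planar harmonic `h` of degree `m`. -/
noncomputable def axialCoeff (m N k : ℕ) : ℝ :=
  (-1) ^ k * N.descFactorial (2 * k) / (4 ^ k * k.factorial * (m + 1).ascFactorial k)

lemma axialCoeff_succ (m N k : ℕ) :
    4 * (k + 1 : ℕ) * ((k + 1 : ℕ) + m) * axialCoeff m N (k + 1) =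
      -((N - 2 * k : ℕ) * (N - 2 * k - 1 : ℕ) * axialCoeff m N k) := by
  have : ((m + 1).ascFactorial k : ℝ) ≠ 0 := by positivity
  have : (m : ℝ) + 1 + k ≠ 0 := by positivity
  simp only [axialCoeff, Nat.mul_succ, Nat.descFactorial_succ, Nat.ascFactorial_succ,
    Nat.factorial_succ, Nat.sub_sub]
  push_cast
  field_simp
  ring

lemma axialCoeff_eq_zero {m N k : ℕ} (hk : N < 2 * k) : axialCoeff m N k = 0 := by
  simp [axialCoeff, Nat.descFactorial_eq_zero_iff_lt.2 hk]

/-- The homogeneous polynomial of degree `N` in `z` and `x² + y²`, monic in `z`, whose product with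
any planar harmonic of degree `m` is harmonic. -/
noncomputable def axial (m N : ℕ) : MvPolynomial (Fin 3) ℝ :=
  ∑ k ∈ Finset.range (N / 2 + 1), axialCoeff m N k • (radSq ^ k * X 2 ^ (N - 2 * k))

lemma isHomogeneous_axial (m N : ℕ) : (axial m N).IsHomogeneous N := by
  refine (homogeneousSubmodule (Fin 3) ℝ N).sum_smul_mem _ fun k hk => ?_
  have degree_eq : 2 * k + (N - 2 * k) = N := by have := Finset.mem_range.1 hk; omega
  simpa only [mem_homogeneousSubmodule, degree_eq] using
    (isHomogeneous_radSq.pow k).mul (isHomogeneous_X_pow (R := ℝ) (2 : Fin 3) (N - 2 * k))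

lemma laplacian_mul_axial {m : ℕ} {h : MvPolynomial (Fin 3) ℝ} (hom : h.IsHomogeneous m)
    (harm : laplacian h = 0) (planar : pderiv 2 h = 0) (N : ℕ) :
    laplacian (h * axial m N) = 0 := by
  let g (k : ℕ) : MvPolynomial (Fin 3) ℝ :=
    (4 * k * (k + m) * axialCoeff m N k) • (h * radSq ^ (k - 1) * X 2 ^ (N - 2 * k))
  have telescope (k : ℕ) :
      laplacian (h * axialCoeff m N k • (radSq ^ k * X 2 ^ (N - 2 * k))) = g k - g (k + 1) := by
    rw [mul_smul_comm, ← mul_assoc, map_smul,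
      laplacian_mul_radSq_pow_mul_X_two_pow hom harm planar]
    simp only [g, axialCoeff_succ, Nat.add_sub_cancel, Nat.mul_succ, Nat.sub_sub]
    module
  calc laplacian (h * axial m N)
      = ∑ k ∈ Finset.range (N / 2 + 1), (g k - g (k + 1)) := by
        simp only [axial, Finset.mul_sum, map_sum, telescope]
    _ = g 0 - g (N / 2 + 1) := Finset.sum_range_sub' g _
    _ = 0 := by simp [g, axialCoeff_eq_zero (m := m) (show N < 2 * (N / 2 + 1) by omega)]

/-! ### Planar harmonics -/

/-- The real-linear map `c ↦ Re (c (x + iy)^m)`. -/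
noncomputable def planarHarmonic : ℕ → ℂ →ₗ[ℝ] MvPolynomial (Fin 3) ℝ
  | 0 => Algebra.linearMap ℝ (MvPolynomial (Fin 3) ℝ) ∘ₗ Complex.reLm
  | m + 1 => LinearMap.mulLeft ℝ (X 0) ∘ₗ planarHarmonic m +
      LinearMap.mulLeft ℝ (X 1) ∘ₗ planarHarmonic m ∘ₗ LinearMap.mulLeft ℝ Complex.I

lemma planarHarmonic_zero (c : ℂ) : planarHarmonic 0 c = C c.re := rfl

lemma planarHarmonic_succ (m : ℕ) (c : ℂ) :
    planarHarmonic (m + 1) c =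
      X 0 * planarHarmonic m c + X 1 * planarHarmonic m (Complex.I * c) := rfl

lemma planarHarmonic_I_mul_I_mul (m : ℕ) (c : ℂ) :
    planarHarmonic m (Complex.I * (Complex.I * c)) = -planarHarmonic m c := by
  rw [← mul_assoc, Complex.I_mul_I, neg_one_mul, map_neg]

lemma isHomogeneous_planarHarmonic (m : ℕ) (c : ℂ) : (planarHarmonic m c).IsHomogeneous m := by
  induction m generalizing c with
  | zero => exact isHomogeneous_C _ _
  | succ m ih =>
    rw [planarHarmonic_succ, add_comm m 1]
    exact ((isHomogeneous_X ℝ 0).mul (ih c)).add ((isHomogeneous_X ℝ 1).mul (ih _))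

lemma pderiv_zero_planarHarmonic_succ (m : ℕ) (c : ℂ) :
    pderiv 0 (planarHarmonic (m + 1) c) = (m + 1) * planarHarmonic m c := by
  induction m generalizing c with
  | zero => simp [planarHarmonic_succ, planarHarmonic_zero]
  | succ m ih =>
    rw [planarHarmonic_succ]
    simp only [map_add, pderiv_mul, ih, pderiv_X_self, pderiv_X_of_ne (one_ne_zero (α := Fin 3))]
    rw [planarHarmonic_succ]
    push_cast
    ring

lemma pderiv_one_planarHarmonic_succ (m : ℕ) (c : ℂ) :
    pderiv 1 (planarHarmonic (m + 1) c) = (m + 1) * planarHarmonic m (Complex.I * c) := by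
  induction m generalizing c with
  | zero => simp [planarHarmonic_succ, planarHarmonic_zero]
  | succ m ih =>
    rw [planarHarmonic_succ]
    simp only [map_add, pderiv_mul, ih, pderiv_X_self, pderiv_X_of_ne (zero_ne_one (α := Fin 3))]
    rw [planarHarmonic_succ m (Complex.I * c)]
    push_cast
    ring

lemma pderiv_two_planarHarmonic (m : ℕ) (c : ℂ) : pderiv 2 (planarHarmonic m c) = 0 := by
  induction m generalizing c with
  | zero => exact pderiv_C
  | succ m ih => simp [planarHarmonic_succ, ih]

lemma laplacian_planarHarmonic (m : ℕ) (c : ℂ) : laplacian (planarHarmonic m c) = 0 := by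
  rw [laplacian_apply, pderiv_two_planarHarmonic]
  rcases m with _ | _ | m
  · simp [planarHarmonic_zero]
  · simp [pderiv_zero_planarHarmonic_succ, pderiv_one_planarHarmonic_succ, planarHarmonic_zero]
  · simp [pderiv_zero_planarHarmonic_succ, pderiv_one_planarHarmonic_succ,
      planarHarmonic_I_mul_I_mul]

/-! ### Solid harmonics -/

/-- The real-linear map sending `c` to `Re (c (x + iy)^m)` times an axial factor of degree
`n - m`. -/
noncomputable def solidHarmonic (n m : ℕ) : ℂ →ₗ[ℝ] MvPolynomial (Fin 3) ℝ :=
  LinearMap.mulRight ℝ (axial m (n - m)) ∘ₗ planarHarmonic m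

lemma solidHarmonic_apply (n m : ℕ) (c : ℂ) :
    solidHarmonic n m c = planarHarmonic m c * axial m (n - m) := rfl

lemma solidHarmonic_mem_harmonicHomog {n m : ℕ} (hmn : m ≤ n) (c : ℂ) :
    solidHarmonic n m c ∈ harmonicHomog n := by
  have hom := isHomogeneous_planarHarmonic m c
  refine mem_harmonicHomog.2 ⟨?_, laplacian_mul_axial hom
    (laplacian_planarHarmonic m c) (pderiv_two_planarHarmonic m c) _⟩
  simpa only [solidHarmonic_apply, Nat.add_sub_cancel' hmn] using
    hom.mul (isHomogeneous_axial m (n - m))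

/-! ### The action of `O(2)` -/

section Orthogonal

variable {ι R : Type*} [Fintype ι] [DecidableEq ι] [CommRing R]

lemma det_sq_eq_one (k : Matrix.orthogonalGroup ι R) : k.1.det ^ 2 = 1 := by
  simpa [sq, star_eq_conjTranspose] using
    congrArg det ((Matrix.mem_orthogonalGroup_iff ι R).1 k.2)

lemma adjugate_eq_det_smul_transpose (k : Matrix.orthogonalGroup ι R) :
    k.1.adjugate = k.1.det • k.1ᵀ := by
  have mul_transpose : k.1 * k.1ᵀ = 1 := (Matrix.mem_orthogonalGroup_iff ι R).1 k.2
  calc k.1.adjugate = k.1.adjugate * (k.1 * k.1ᵀ) := by rw [mul_transpose, mul_one]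
    _ = k.1.det • k.1ᵀ := by rw [← mul_assoc, adjugate_mul, smul_mul, one_mul]

end Orthogonal

section PlaneAction

open scoped ComplexConjugate

variable (k : Matrix.orthogonalGroup (Fin 2) ℝ)

lemma orthogonal_apply_zero_one : k.1 0 1 = -k.1.det * k.1 1 0 := by
  have entry : -k.1 0 1 = k.1.det * k.1 1 0 := by
    simpa [adjugate_fin_two] using congrFun₂ (adjugate_eq_det_smul_transpose k) 0 1
  rw [neg_mul, ← entry, neg_neg]

lemma orthogonal_apply_one_one : k.1 1 1 = k.1.det * k.1 0 0 := by
  simpa [adjugate_fin_two] using congrFun₂ (adjugate_eq_det_smul_transpose k) 0 0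

lemma det_embed23 (A : Matrix (Fin 2) (Fin 2) ℝ) : (embed23 A).det = A.det := by
  simp [embed23, det_fin_two, det_fin_three]

lemma first_column_sq_add_sq : k.1 0 0 ^ 2 + k.1 1 0 ^ 2 = 1 := by
  have det_sq := det_sq_eq_one k
  have det_eq := k.1.det_fin_two
  rw [orthogonal_apply_zero_one, orthogonal_apply_one_one] at det_eq
  linear_combination (1 - k.1 0 0 ^ 2 - k.1 1 0 ^ 2) * det_sq - k.1.det * det_eq

/-- Substitution `p(x) ↦ p(k⁻¹x)` by the image of `k` in `O(3)`. -/
noncomputable def invSubst : MvPolynomial (Fin 3) ℝ →ₐ[ℝ] MvPolynomial (Fin 3) ℝ :=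
  matrixSubst (embed23 (k⁻¹ : Matrix.orthogonalGroup (Fin 2) ℝ).1)

lemma invSubst_X_zero : invSubst k (X 0) = k.1 0 0 • X 0 + k.1 1 0 • X 1 := by
  simp [invSubst, matrixSubst, embed23, Fin.sum_univ_three, star_apply]

lemma invSubst_X_one :
    invSubst k (X 1) = k.1.det • (k.1 0 0 • X 1 - k.1 1 0 • X 0) := by
  have transposed : invSubst k (X 1) = k.1 0 1 • X 0 + k.1 1 1 • X 1 := by
    simp [invSubst, matrixSubst, embed23, Fin.sum_univ_three, star_apply]
  rw [transposed, orthogonal_apply_zero_one, orthogonal_apply_one_one]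
  module

lemma invSubst_X_two : invSubst k (X 2) = X 2 := by
  simp [invSubst, matrixSubst, embed23, Fin.sum_univ_three]

lemma invSubst_radSq : invSubst k radSq = radSq := by
  have det_sq : C k.1.det ^ 2 = (1 : MvPolynomial (Fin 3) ℝ) := by
    rw [← map_pow, det_sq_eq_one, map_one]
  have col_sq : C (k.1 0 0) ^ 2 + C (k.1 1 0) ^ 2 = (1 : MvPolynomial (Fin 3) ℝ) := by
    rw [← map_pow, ← map_pow, ← map_add, first_column_sq_add_sq, map_one]
  simp only [radSq, map_add, map_pow, invSubst_X_zero, invSubst_X_one, smul_eq_C_mul]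
  linear_combination (C (k.1 0 0) * X 1 - C (k.1 1 0) * X 0) ^ 2 * det_sq +
    (X 0 ^ 2 + X 1 ^ 2) * col_sq

lemma invSubst_axial (m N : ℕ) : invSubst k (axial m N) = axial m N := by
  simp only [axial, map_sum, map_smul, map_mul, map_pow, invSubst_radSq, invSubst_X_two]

/-- The first column of `k`, read as a complex number: `e^{iφ}` for `k = R_φ` and `k = S_φ`. -/
def firstColumn : ℂ := ⟨k.1 0 0, k.1 1 0⟩

/-- The identity of `ℂ` for `ε = 1` and complex conjugation for `ε = -1`. -/
def signConj (ε : ℝ) : ℂ →ₗ[ℝ] ℂ where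
  toFun c := ⟨c.re, ε * c.im⟩
  map_add' c d := by apply Complex.ext <;> simp [mul_add]
  map_smul' r c := by apply Complex.ext <;> simp [mul_left_comm]

lemma signConj_apply (ε : ℝ) (c : ℂ) : signConj ε c = ⟨c.re, ε * c.im⟩ := rfl

lemma smul_signConj_I_mul {ε : ℝ} (hε : ε ^ 2 = 1) (c : ℂ) :
    ε • signConj ε (Complex.I * c) = Complex.I * signConj ε c := by
  rw [sq] at hε
  apply Complex.ext <;> simp [signConj_apply, ← mul_assoc, hε]

-- With `w = x + iy` and `u = firstColumn k`, the substitution sends `w` to `conj u * w`, followed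
-- by conjugation when `det k = -1`; under the real part that conjugation can be moved to `c`.
lemma invSubst_planarHarmonic (m : ℕ) (c : ℂ) :
    invSubst k (planarHarmonic m c) =
      planarHarmonic m (conj (firstColumn k) ^ m * signConj k.1.det c) := by
  induction m generalizing c with
  | zero =>
    simp [planarHarmonic_zero, signConj_apply]
  | succ m ih =>
    set a := k.1 0 0
    set b := k.1 1 0
    set d := conj (firstColumn k) ^ m * signConj k.1.det c with hd
    have conj_column : conj (firstColumn k) = a - b * Complex.I := by
      apply Complex.ext <;> simp [firstColumn, a, b]
    have conj_column_mul : conj (firstColumn k) * d = a • d - b • (Complex.I * d) := by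
      rw [conj_column, Complex.real_smul, Complex.real_smul]
      ring
    have I_mul_conj_column_mul :
        Complex.I * (conj (firstColumn k) * d) = b • d + a • (Complex.I * d) := by
      rw [conj_column, Complex.real_smul, Complex.real_smul]
      linear_combination -b * d * Complex.I_mul_I
    have ih_I : k.1.det • invSubst k (planarHarmonic m (Complex.I * c)) =
        planarHarmonic m (Complex.I * d) := by
      rw [ih, ← map_smul, ← mul_smul_comm, smul_signConj_I_mul (det_sq_eq_one k), hd]
      congr 1
      ring
    calc invSubst k (planarHarmonic (m + 1) c)
        = (a • X 0 + b • X 1) * planarHarmonic m d +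
            (a • X 1 - b • X 0) * planarHarmonic m (Complex.I * d) := by
          rw [planarHarmonic_succ, map_add, map_mul, map_mul, invSubst_X_zero, invSubst_X_one,
            smul_mul_assoc, ← mul_smul_comm, ih_I, ih]
      _ = planarHarmonic (m + 1) (conj (firstColumn k) * d) := by
          rw [planarHarmonic_succ, I_mul_conj_column_mul, conj_column_mul]
          simp only [map_add, map_sub, map_smul, smul_eq_C_mul]
          ring
      _ = _ := by rw [pow_succ', mul_assoc]

lemma invSubst_solidHarmonic (n m : ℕ) (c : ℂ) :
    invSubst k (solidHarmonic n m c) =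
      solidHarmonic n m (conj (firstColumn k) ^ m * signConj k.1.det c) := by
  simp only [solidHarmonic_apply, map_mul, invSubst_planarHarmonic, invSubst_axial]

/-- The map `v ↦ i * conj (v.1 + i v.2)`. Conjugation passes from `E^m`, on which a rotation acts by
`e^{imφ}`, to coefficients of `(x + iy)^m`, on which it acts by `e^{-imφ}`; the factor `i` accounts
for the twist by the determinant. -/
noncomputable def twistedCoord : (ℝ × ℝ) ≃ₗ[ℝ] ℂ :=
  LinearEquiv.prodComm ℝ ℝ ℝ ≪≫ₗ Complex.equivRealProdLm.symm

lemma twistedCoord_apply (v : ℝ × ℝ) : twistedCoord v = ⟨v.2, v.1⟩ := rfl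

lemma Erep_eq (m : ℕ) :
    Erep m k = !![(firstColumn k ^ m).re, -k.1.det * (firstColumn k ^ m).im;
      (firstColumn k ^ m).im, k.1.det * (firstColumn k ^ m).re] := rfl

lemma twistedCoord_Erep (m : ℕ) (v : ℝ × ℝ) :
    twistedCoord (apply2 (Erep m k) v) =
      k.1.det • (conj (firstColumn k) ^ m * signConj k.1.det (twistedCoord v)) := by
  have det_sq := det_sq_eq_one k
  rw [← map_pow]
  apply Complex.ext <;>
    simp only [twistedCoord_apply, signConj_apply, apply2, Erep_eq, Complex.smul_re,
      Complex.smul_im, Complex.mul_re, Complex.mul_im, Complex.conj_re, Complex.conj_im,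
      smul_eq_mul, of_apply, cons_val', cons_val_zero, cons_val_one, cons_val_fin_one]
  · linear_combination (-(firstColumn k ^ m).im * v.1) * det_sq
  · linear_combination (-(firstColumn k ^ m).re * v.1) * det_sq

end PlaneAction

/-! ### The intertwining map -/

/-- The map from `E^{0−} ⊕ E^1 ⊕ ⋯ ⊕ E^n` to polynomials that sends each summand to the solid
harmonics with planar factor of the corresponding degree. -/
noncomputable def toPoly (n : ℕ) : (ℝ × (Fin n → ℝ × ℝ)) →ₗ[ℝ] MvPolynomial (Fin 3) ℝ :=
  (solidHarmonic n 0 ∘ₗ Complex.ofRealAm.toLinearMap).coprod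
    (∑ j : Fin n, solidHarmonic n (j + 1) ∘ₗ twistedCoord.toLinearMap ∘ₗ LinearMap.proj j)

lemma toPoly_apply {n : ℕ} (v : ℝ × (Fin n → ℝ × ℝ)) :
    toPoly n v =
      solidHarmonic n 0 v.1 + ∑ j : Fin n, solidHarmonic n (j + 1) (twistedCoord (v.2 j)) := by
  simp [toPoly]

lemma toPoly_mem_harmonicHomog {n : ℕ} (v : ℝ × (Fin n → ℝ × ℝ)) :
    toPoly n v ∈ harmonicHomog n := by
  rw [toPoly_apply]
  exact add_mem (solidHarmonic_mem_harmonicHomog n.zero_le _)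
    (sum_mem fun j _ => solidHarmonic_mem_harmonicHomog j.2 _)

lemma toPoly_equivariant {n : ℕ} (k : Matrix.orthogonalGroup (Fin 2) ℝ)
    (v : ℝ × (Fin n → ℝ × ℝ)) :
    toPoly n (k.1.det * v.1, fun j => apply2 (Erep (j + 1) k) (v.2 j)) =
      k.1.det • invSubst k (toPoly n v) := by
  have zonal : solidHarmonic n 0 ((k.1.det * v.1 : ℝ) : ℂ) =
      k.1.det • invSubst k (solidHarmonic n 0 v.1) := by
    rw [invSubst_solidHarmonic, ← map_smul]
    congr 1
    apply Complex.ext <;> simp [signConj_apply]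
  simp only [toPoly_apply, map_add, map_sum, smul_add, Finset.smul_sum, zonal, twistedCoord_Erep,
    map_smul, invSubst_solidHarmonic]

/-- Evaluation along the isotropic curve `(x, y, z) = (t, -it, 1)`, on which `x + iy = 2t` and
`x - iy = 0`. -/
noncomputable def isotropicEval : MvPolynomial (Fin 3) ℝ →ₐ[ℝ] Polynomial ℂ :=
  aeval ![Polynomial.X, -Complex.I • Polynomial.X, 1]

lemma isotropicEval_C (r : ℝ) : isotropicEval (C r) = Polynomial.C (r : ℂ) := by
  simp [isotropicEval]

lemma isotropicEval_X_zero : isotropicEval (X 0) = Polynomial.X := by simp [isotropicEval]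

lemma isotropicEval_X_one : isotropicEval (X 1) = -Complex.I • Polynomial.X := by
  simp [isotropicEval]

lemma isotropicEval_X_two : isotropicEval (X 2) = 1 := by simp [isotropicEval]

lemma isotropicEval_radSq : isotropicEval radSq = 0 := by
  rw [radSq, map_add, map_pow, map_pow, isotropicEval_X_zero, isotropicEval_X_one, smul_pow]
  simp

lemma isotropicEval_axial (m N : ℕ) : isotropicEval (axial m N) = 1 := by
  rw [axial, map_sum, Finset.sum_range_succ']
  simp [isotropicEval_radSq, isotropicEval_X_two, axialCoeff]

lemma isotropicEval_planarHarmonic_succ (m : ℕ) (c : ℂ) :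
    isotropicEval (planarHarmonic (m + 1) c) = Polynomial.monomial (m + 1) (2 ^ m * c) := by
  induction m generalizing c with
  | zero =>
    have C_re_add_im : Polynomial.C c =
        Polynomial.C (c.re : ℂ) + Polynomial.C (c.im : ℂ) * Polynomial.C Complex.I := by
      rw [← map_mul, ← map_add, Complex.re_add_im]
    simp only [planarHarmonic_succ, planarHarmonic_zero, map_add, map_mul, isotropicEval_X_zero,
      isotropicEval_X_one, isotropicEval_C, Complex.I_mul_re, zero_add, pow_zero, one_mul,
      ← Polynomial.C_mul_X_eq_monomial, Polynomial.smul_eq_C_mul, C_re_add_im,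
      map_neg]
    ring
  | succ m ih =>
    rw [planarHarmonic_succ, map_add, map_mul, map_mul, ih, ih, isotropicEval_X_zero,
      isotropicEval_X_one, smul_mul_assoc, Polynomial.X_mul_monomial, Polynomial.X_mul_monomial,
      Polynomial.smul_monomial, ← map_add]
    congr 1
    rw [smul_eq_mul]
    linear_combination -2 ^ m * c * Complex.I_mul_I

lemma isotropicEval_toPoly {n : ℕ} (v : ℝ × (Fin n → ℝ × ℝ)) :
    isotropicEval (toPoly n v) = Polynomial.C (v.1 : ℂ) +
      ∑ j : Fin n, Polynomial.monomial ((j : ℕ) + 1) (2 ^ (j : ℕ) * twistedCoord (v.2 j)) := by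
  simp [toPoly_apply, solidHarmonic_apply, isotropicEval_axial, planarHarmonic_zero,
    isotropicEval_planarHarmonic_succ]

lemma coeff_zero_isotropicEval_toPoly {n : ℕ} (v : ℝ × (Fin n → ℝ × ℝ)) :
    (isotropicEval (toPoly n v)).coeff 0 = v.1 := by
  simp [isotropicEval_toPoly, Polynomial.coeff_monomial]

lemma coeff_succ_isotropicEval_toPoly {n : ℕ} (v : ℝ × (Fin n → ℝ × ℝ)) (j : Fin n) :
    (isotropicEval (toPoly n v)).coeff (j + 1) = 2 ^ (j : ℕ) * twistedCoord (v.2 j) := by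
  simp [isotropicEval_toPoly, Polynomial.coeff_monomial, Fin.val_inj]

lemma toPoly_injective (n : ℕ) : Function.Injective (toPoly n) := by
  refine (injective_iff_map_eq_zero _).2 fun v hv => Prod.ext ?_ (funext fun j => ?_)
  · simpa [hv] using (coeff_zero_isotropicEval_toPoly v).symm
  · simpa [hv] using (coeff_succ_isotropicEval_toPoly v j).symm

/-! ### The dimension of `H_n` -/

-- Harmonicity expresses the coefficients with `z`-exponent `c + 2` through those with
-- `z`-exponent `c`.
lemma eq_zero_of_laplacian_eq_zero {p : MvPolynomial (Fin 3) ℝ} (harm : laplacian p = 0)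
    (cauchy : ∀ d : Fin 3 →₀ ℕ, d 2 ≤ 1 → coeff d p = 0) : p = 0 := by
  suffices ∀ c, ∀ d : Fin 3 →₀ ℕ, d 2 = c → coeff d p = 0 from
    MvPolynomial.ext _ _ fun d => this _ d rfl
  intro c
  induction c using Nat.twoStepInduction with
  | zero => exact fun d hd => cauchy d (by omega)
  | one => exact fun d hd => cauchy d (by omega)
  | more c ih _ =>
    intro d hd
    obtain ⟨d, rfl⟩ : ∃ d', d = d' + Finsupp.single 2 1 + Finsupp.single 2 1 := by
      refine ⟨d - Finsupp.single 2 1 - Finsupp.single 2 1, ?_⟩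
      ext i
      fin_cases i <;> simp
      omega
    have hc : d 2 = c := by simpa using hd
    have coeff_laplacian := congrArg (coeff d) harm
    simp only [laplacian_apply, coeff_add, coeff_pderiv, coeff_zero,
      ih (d + Finsupp.single 0 1 + Finsupp.single 0 1) (by simpa using hc),
      ih (d + Finsupp.single 1 1 + Finsupp.single 1 1) (by simpa using hc)] at coeff_laplacian
    have exponent_ne_zero : (d 2 : ℝ) + 1 ≠ 0 ∧ (d 2 : ℝ) + 1 + 1 ≠ 0 := by
      constructor <;> positivity
    simpa [exponent_ne_zero] using coeff_laplacian

/-- The coefficients of a homogeneous polynomial of degree `n` at the monomials with `z`-exponent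
`0` or `1`: its Cauchy data on the plane `z = 0`. -/
noncomputable def cauchyData (n : ℕ) :
    MvPolynomial (Fin 3) ℝ →ₗ[ℝ] (Fin (n + 1) → ℝ) × (Fin n → ℝ) :=
  LinearMap.prod
    (LinearMap.pi fun a => lcoeff ℝ (Finsupp.equivFunOnFinite.symm ![(a : ℕ), n - a, 0]))
    (LinearMap.pi fun a => lcoeff ℝ (Finsupp.equivFunOnFinite.symm ![(a : ℕ), n - 1 - a, 1]))

lemma coeff_eq_zero_of_cauchyData_eq_zero {n : ℕ} {p : MvPolynomial (Fin 3) ℝ}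
    (hom : p.IsHomogeneous n) (hp : cauchyData n p = 0) {d : Fin 3 →₀ ℕ} (hd : d 2 ≤ 1) :
    coeff d p = 0 := by
  by_contra hne
  have degree_eq : d 0 + d 1 + d 2 = n := by
    rw [← Fin.sum_univ_three, ← Finsupp.degree_eq_sum]
    exact not_imp_comm.1 hom.coeff_eq_zero hne
  apply hne
  obtain hz | hz : d 2 = 0 ∨ d 2 = 1 := by omega
  · have d_eq : d = Finsupp.equivFunOnFinite.symm ![d 0, n - d 0, 0] := by
      ext i; fin_cases i <;> simp <;> omega
    rw [d_eq]
    exact congrFun (congrArg Prod.fst hp) ⟨d 0, by omega⟩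
  · have d_eq : d = Finsupp.equivFunOnFinite.symm ![d 0, n - 1 - d 0, 1] := by
      ext i; fin_cases i <;> simp <;> omega
    rw [d_eq]
    exact congrFun (congrArg Prod.snd hp) ⟨d 0, by omega⟩

lemma cauchyData_injective (n : ℕ) :
    Function.Injective (cauchyData n ∘ₗ (harmonicHomog n).subtype) := by
  refine (injective_iff_map_eq_zero _).2 fun ⟨p, hp⟩ hdata => Subtype.ext ?_
  obtain ⟨hom, harm⟩ := mem_harmonicHomog.1 hp
  exact eq_zero_of_laplacian_eq_zero harm fun d =>
    coeff_eq_zero_of_cauchyData_eq_zero hom hdata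

instance finiteDimensional_harmonicHomog (n : ℕ) : FiniteDimensional ℝ (harmonicHomog n) :=
  FiniteDimensional.of_injective _ (cauchyData_injective n)

lemma finrank_harmonicHomog_le (n : ℕ) : Module.finrank ℝ (harmonicHomog n) ≤ 2 * n + 1 :=
  (LinearMap.finrank_le_finrank_of_injective (cauchyData_injective n)).trans_eq <| by
    simpa using by ring

lemma range_toPoly (n : ℕ) : LinearMap.range (toPoly n) = harmonicHomog n := by
  refine Submodule.eq_of_le_of_finrank_le ?_ ?_
  · rintro _ ⟨v, rfl⟩
    exact toPoly_mem_harmonicHomog v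
  · calc Module.finrank ℝ (harmonicHomog n) ≤ 2 * n + 1 := finrank_harmonicHomog_le n
      _ = Module.finrank ℝ (ℝ × (Fin n → ℝ × ℝ)) := by
        simp [Module.finrank_pi_fintype, add_comm, mul_comm]
      _ = Module.finrank ℝ (LinearMap.range (toPoly n)) :=
        (LinearMap.finrank_range_of_inj (toPoly_injective n)).symm

end HarmonicBranching

/-- The restriction to the embedded subgroup `O(2)` of the det-twisted representation of `O(3)`
on the space `H_n` of real harmonic homogeneous polynomials of degree `n` in three variables
(where `g` acts by `(g·p)(x) = det(g)·p(g⁻¹x)`) is equivalent to the direct sum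
`E^{0−} ⊕ E^1 ⊕ E^2 ⊕ ⋯ ⊕ E^n`. -/
theorem restrict_det_twisted_harmonic_O3_to_O2 (n : ℕ) :
    ∃ T : (ℝ × (Fin n → ℝ × ℝ)) ≃ₗ[ℝ] harmonicHomog n,
      ∀ (k : Matrix.orthogonalGroup (Fin 2) ℝ) (v : ℝ × (Fin n → ℝ × ℝ)),
        ((T (((k : Matrix (Fin 2) (Fin 2) ℝ)).det * v.1,
              fun j => apply2 (Erep ((j : ℕ) + 1) k) (v.2 j)) : harmonicHomog n)
            : MvPolynomial (Fin 3) ℝ)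
          = (embed23 (k : Matrix (Fin 2) (Fin 2) ℝ)).det •
              matrixSubst (embed23 ((k⁻¹ : Matrix.orthogonalGroup (Fin 2) ℝ)
                : Matrix (Fin 2) (Fin 2) ℝ)) ((T v : MvPolynomial (Fin 3) ℝ)) := by
  open HarmonicBranching in
  refine ⟨LinearEquiv.ofInjective (toPoly n) (toPoly_injective n) ≪≫ₗ
    LinearEquiv.ofEq _ _ (range_toPoly n), fun k v => ?_⟩
  rw [det_embed23]
  exact toPoly_equivariant k v
end

section
/- For every integer n ≥ 0, the representation of O(3) on the space H_n of real harmonic homogeneous polynomials of degree n in three variables, acting by (g·p)(x) = p(g⁻¹x), is irreducible (the only invariant subspaces are {0} and H_n), and every linear map f : H_n → H_n commuting with the action of every g ∈ O(3) is a real scalar multiple of the identity. -/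
open Matrix MvPolynomial

/-!
For the Fischer form `⟨p, q⟩ = p(∂) q (0)`, which is positive definite, the substitution
`p(x) ↦ p(Ax)` is adjoint to `p(x) ↦ p(Aᵀx)`, and multiplication by `xᵢ` is adjoint to `∂ᵢ`. Fix a
coordinate vector `e`. If `W ≠ 0` is an invariant space of homogeneous polynomials, the vector of
`W` representing evaluation at `e` is zonal, i.e. fixed by the stabilizer of `e`, and does not
vanish at `e`.

A zonal harmonic polynomial `p` of degree `n` with `p(e) = 0` is zero, by induction on `n`: the
derivative `∂ₑp` is again zonal and harmonic and takes the value `n p(e) = 0` at `e` by Euler's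
identity, so it vanishes. Then `p` is a radial function of the other variables, hence for `n > 0` a
multiple of the sum of their squares; multiplication by this sum is adjoint to the Laplacian in
these variables, which annihilates `p`, so `⟨p, p⟩ = 0`.

Hence the zonal harmonic polynomials of degree `n` form at most a line. A nonzero invariant `W` and
its orthogonal complement in the harmonic space cannot both contain this line, so the complement is
zero. An equivariant endomorphism maps the line to itself, so it has an eigenvector there, and the
eigenspace, being invariant, is everything.
-/

section LinearSubst

variable {σ R : Type*} [Fintype σ] [CommSemiring R]

/-- The linear change of variables `p(x) ↦ p(Ax)`; this is `matrixSubst` for an arbitrary finite set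
of variables and an arbitrary coefficient ring. -/
noncomputable def linearSubst (A : Matrix σ σ R) : MvPolynomial σ R →ₐ[R] MvPolynomial σ R :=
  aeval fun i => ∑ j, A i j • X j

lemma linearSubst_X (A : Matrix σ σ R) (i : σ) : linearSubst A (X i) = ∑ j, A i j • X j :=
  aeval_X _ i

lemma eval_linearSubst (A : Matrix σ σ R) (v : σ → R) (p : MvPolynomial σ R) :
    eval v (linearSubst A p) = eval (A *ᵥ v) p := by
  induction p using MvPolynomial.induction_on with
  | C a => simp [linearSubst]
  | add p q hp hq => simp [hp, hq]
  | mul_X p i hp => simp [hp, linearSubst_X, smul_eval, mulVec, dotProduct]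

lemma isHomogeneous_linearSubst (A : Matrix σ σ R) {n : ℕ} {p : MvPolynomial σ R}
    (hp : p.IsHomogeneous n) : (linearSubst A p).IsHomogeneous n := by
  have hlin (i : σ) : (∑ j, A i j • (X j : MvPolynomial σ R)).IsHomogeneous 1 :=
    (homogeneousSubmodule σ R 1).sum_mem fun j _ =>
      Submodule.smul_mem _ _ (isHomogeneous_X R j)
  simpa only [linearSubst, one_mul] using hp.aeval _ hlin

lemma pderiv_linearSubst (A : Matrix σ σ R) (j : σ) (p : MvPolynomial σ R) :
    pderiv j (linearSubst A p) = ∑ k, A k j • linearSubst A (pderiv k p) := by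
  classical
  induction p using MvPolynomial.induction_on with
  | C a => simp [linearSubst]
  | add p q hp hq => simp [hp, hq, Finset.sum_add_distrib]
  | mul_X p i hp =>
    have hX : pderiv j (linearSubst A (X i)) = C (A i j) := by
      simp [linearSubst_X, pderiv_X, Pi.single_apply, smul_eq_C_mul]
    simp only [map_mul, pderiv_mul, hp, hX, pderiv_X, Pi.single_apply, map_add, smul_add,
      Finset.sum_add_distrib, Finset.sum_mul, smul_mul_assoc]
    simp [smul_eq_C_mul, mul_comm]

end LinearSubst

section Laplacian

variable {σ R : Type*} [CommSemiring R]

lemma pderiv_pderiv_comm (i j : σ) (p : MvPolynomial σ R) :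
    pderiv i (pderiv j p) = pderiv j (pderiv i p) := by
  classical
  ext d
  by_cases hij : i = j
  · rw [hij]
  · simp only [coeff_pderiv, Finsupp.add_apply, Finsupp.single_eq_of_ne hij,
      Finsupp.single_eq_of_ne (Ne.symm hij), add_right_comm d, add_zero, mul_right_comm]

variable [Fintype σ]

variable (σ R) in
/-- The Laplacian `∑ i, ∂ᵢ²` on polynomials in the variables `σ`; this is `laplacian` for an
arbitrary finite set of variables and an arbitrary coefficient ring. -/
noncomputable def polyLaplacian : MvPolynomial σ R →ₗ[R] MvPolynomial σ R :=
  ∑ i, (pderiv i).toLinearMap ∘ₗ (pderiv i).toLinearMap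

lemma polyLaplacian_apply (p : MvPolynomial σ R) :
    polyLaplacian σ R p = ∑ i, pderiv i (pderiv i p) := by
  simp [polyLaplacian]

lemma polyLaplacian_pderiv (k : σ) (p : MvPolynomial σ R) :
    polyLaplacian σ R (pderiv k p) = pderiv k (polyLaplacian σ R p) := by
  simp only [polyLaplacian_apply, map_sum, pderiv_pderiv_comm _ k]

variable (σ R) in
/-- The harmonic homogeneous polynomials of degree `n` in the variables `σ`; this is
`harmonicHomog n` for an arbitrary finite set of variables and an arbitrary coefficient ring. -/
noncomputable def harmonicSubmodule (n : ℕ) : Submodule R (MvPolynomial σ R) :=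
  homogeneousSubmodule σ R n ⊓ LinearMap.ker (polyLaplacian σ R)

lemma mem_harmonicSubmodule {n : ℕ} {p : MvPolynomial σ R} :
    p ∈ harmonicSubmodule σ R n ↔ p.IsHomogeneous n ∧ polyLaplacian σ R p = 0 :=
  Iff.rfl

lemma pderiv_mem_harmonicSubmodule (k : σ) {n : ℕ} {p : MvPolynomial σ R}
    (hp : p ∈ harmonicSubmodule σ R (n + 1)) : pderiv k p ∈ harmonicSubmodule σ R n := by
  obtain ⟨hhom, hlap⟩ := mem_harmonicSubmodule.1 hp
  exact mem_harmonicSubmodule.2 ⟨hhom.pderiv, by rw [polyLaplacian_pderiv, hlap, map_zero]⟩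

end Laplacian

section FischerForm

variable {σ R : Type*} [Fintype σ] [CommSemiring R]

variable (σ R) in
/-- The Fischer form `⟨p, q⟩ = ∑ d, d! p_d q_d`, that is, `p(∂) q` evaluated at the origin. -/
noncomputable def fischerForm : LinearMap.BilinForm R (MvPolynomial σ R) :=
  (basisMonomials σ R).constr R fun d => (∏ i, (d i).factorial : R) • lcoeff R d

lemma fischerForm_monomial (d : σ →₀ ℕ) (a : R) (q : MvPolynomial σ R) :
    fischerForm σ R (monomial d a) q = a * (∏ i, (d i).factorial : R) * coeff d q := by
  have hmon : monomial d a = a • basisMonomials σ R d := by simp [smul_monomial]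
  rw [hmon, map_smul, fischerForm, Module.Basis.constr_basis]
  simp [mul_assoc]

lemma fischerForm_apply (p q : MvPolynomial σ R) :
    fischerForm σ R p q
      = ∑ d ∈ p.support, coeff d p * (∏ i, (d i).factorial : R) * coeff d q := by
  conv_lhs => rw [p.as_sum]
  simp only [map_sum, LinearMap.sum_apply, fischerForm_monomial]

lemma fischerForm_isSymm : (fischerForm σ R).IsSymm := by
  classical
  refine ⟨fun p q => ?_⟩
  induction p using MvPolynomial.induction_on' with
  | add p p' hp hp' => simp_all
  | monomial d a =>
    induction q using MvPolynomial.induction_on' with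
    | add q q' hq hq' => simp_all
    | monomial e b =>
      obtain rfl | hde := eq_or_ne d e
      · simp [fischerForm_monomial, mul_comm, mul_left_comm]
      · simp [fischerForm_monomial, coeff_monomial, hde, hde.symm]

lemma prod_factorial_add_single (d : σ →₀ ℕ) (i : σ) :
    ∏ j, ((d + Finsupp.single i 1 : σ →₀ ℕ) j).factorial = (d i + 1) * ∏ j, (d j).factorial := by
  classical
  rw [← Finset.mul_prod_erase _ _ (Finset.mem_univ i),
    ← Finset.mul_prod_erase _ (fun j => (d j).factorial) (Finset.mem_univ i), ← mul_assoc]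
  congr 1
  · simp [Nat.factorial_succ]
  · refine Finset.prod_congr rfl fun j hj => ?_
    simp [Finsupp.single_eq_of_ne (Finset.ne_of_mem_erase hj)]

lemma fischerForm_mul_X (p q : MvPolynomial σ R) (i : σ) :
    fischerForm σ R (p * X i) q = fischerForm σ R p (pderiv i q) := by
  classical
  induction p using MvPolynomial.induction_on' with
  | add p p' hp hp' => simp [add_mul, hp, hp']
  | monomial d a =>
    simp only [X, monomial_mul, fischerForm_monomial, coeff_pderiv, ← Nat.cast_prod,
      prod_factorial_add_single]
    push_cast
    ring

lemma fischerForm_mul_sum_X_sq (s : Finset σ) (p q : MvPolynomial σ R) :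
    fischerForm σ R (p * ∑ i ∈ s, X i ^ 2) q
      = fischerForm σ R p (∑ i ∈ s, pderiv i (pderiv i q)) := by
  simp only [Finset.mul_sum, map_sum, LinearMap.sum_apply, sq, ← mul_assoc, fischerForm_mul_X]

lemma eq_zero_of_fischerForm_self_eq_zero {K : Type*} [CommRing K] [LinearOrder K]
    [IsStrictOrderedRing K] {p : MvPolynomial σ K} (hp : fischerForm σ K p p = 0) : p = 0 := by
  have hfact (d : σ →₀ ℕ) : 0 < (∏ i, (d i).factorial : K) :=
    Finset.prod_pos fun _ _ => by positivity
  simp only [fischerForm_apply, mul_right_comm _ (Finset.prod _ _)] at hp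
  rw [Finset.sum_eq_zero_iff_of_nonneg
    fun d _ => mul_nonneg (mul_self_nonneg _) (hfact d).le] at hp
  ext d
  by_cases hd : d ∈ p.support
  · simpa [(hfact d).ne'] using hp d hd
  · simpa using hd

lemma fischerForm_linearSubst_left (A : Matrix σ σ R) (p q : MvPolynomial σ R) :
    fischerForm σ R (linearSubst A p) q = fischerForm σ R p (linearSubst Aᵀ q) := by
  induction p using MvPolynomial.induction_on generalizing q with
  | add p p' hp hp' => simp [hp, hp']
  | C a =>
    have hcoeff : coeff 0 (linearSubst Aᵀ q) = coeff 0 q := by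
      simpa [← constantCoeff_eq, ← eval_zero] using eval_linearSubst Aᵀ 0 q
    rw [← algebraMap_eq, AlgHom.commutes, algebraMap_eq, C_apply, fischerForm_monomial,
      fischerForm_monomial, hcoeff]
  | mul_X p i hp =>
    calc fischerForm σ R (linearSubst A (p * X i)) q
        = ∑ j, A i j * fischerForm σ R (linearSubst A p * X j) q := by
          simp [linearSubst_X, Finset.mul_sum]
      _ = ∑ j, A i j * fischerForm σ R p (linearSubst Aᵀ (pderiv j q)) := by
          simp only [fischerForm_mul_X, hp]
      _ = fischerForm σ R (p * X i) (linearSubst Aᵀ q) := by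
          simp [fischerForm_mul_X, pderiv_linearSubst]

end FischerForm

section OrthogonalGroup

variable {σ : Type*} [Fintype σ] [DecidableEq σ]

lemma transpose_mem_orthogonalGroup {R : Type*} [CommRing R] {A : Matrix σ σ R}
    (hA : A ∈ orthogonalGroup σ R) : Aᵀ ∈ orthogonalGroup σ R :=
  (mem_orthogonalGroup_iff _ _).2 <| by
    rw [transpose_transpose, (mem_orthogonalGroup_iff' _ _).1 hA]

lemma transpose_mulVec_eq_of_mulVec_eq {R : Type*} [CommRing R] {A : Matrix σ σ R}
    (hA : A ∈ orthogonalGroup σ R) {v w : σ → R} (h : A *ᵥ v = w) : Aᵀ *ᵥ w = v := by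
  rw [← h, mulVec_mulVec, (mem_orthogonalGroup_iff' _ _).1 hA, one_mulVec]

/-- The matrix of the reflection in the hyperplane orthogonal to `v`. Since `2 / 0 = 0`, it is the
identity matrix if `v ⬝ᵥ v = 0`. -/
def householder {K : Type*} [Field K] (v : σ → K) : Matrix σ σ K :=
  1 - (2 / (v ⬝ᵥ v)) • vecMulVec v v

lemma householder_mulVec {K : Type*} [Field K] (v w : σ → K) :
    householder v *ᵥ w = w - (2 / (v ⬝ᵥ v) * (v ⬝ᵥ w)) • v := by
  simp [householder, sub_mulVec, smul_mulVec, vecMulVec_mulVec, smul_smul]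

lemma householder_mem_orthogonalGroup {K : Type*} [Field K] (v : σ → K) :
    householder v ∈ orthogonalGroup σ K := by
  have hsymm : (householder v)ᵀ = householder v := by simp [householder, transpose_vecMulVec]
  rw [mem_orthogonalGroup_iff, hsymm]
  refine ext_of_mulVec_single fun i => ?_
  rw [← mulVec_mulVec, householder_mulVec, householder_mulVec, dotProduct_sub, dotProduct_smul,
    one_mulVec, sub_sub, ← add_smul, smul_eq_mul]
  obtain hv | hv := eq_or_ne (v ⬝ᵥ v) 0
  · simp [hv]
  · convert sub_zero _
    convert zero_smul K v
    field_simp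
    ring

lemma householder_sub_mulVec {K : Type*} [Field K] [LinearOrder K] [IsStrictOrderedRing K]
    {v w : σ → K} (h : v ⬝ᵥ v = w ⬝ᵥ w) : householder (v - w) *ᵥ v = w := by
  obtain rfl | hvw := eq_or_ne v w
  · simp [householder]
  have hne : (v - w) ⬝ᵥ (v - w) ≠ 0 :=
    dotProduct_self_eq_zero.not.2 (sub_ne_zero.2 hvw)
  have hnorm : (v - w) ⬝ᵥ (v - w) = 2 * ((v - w) ⬝ᵥ v) := by
    simp only [sub_dotProduct, dotProduct_sub, dotProduct_comm v w, h]
    ring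
  rw [householder_mulVec, div_mul_eq_mul_div, ← hnorm, div_self hne, one_smul, sub_sub_cancel]

lemma exists_mem_orthogonalGroup_mulVec_eq {K : Type*} [Field K] [LinearOrder K]
    [IsStrictOrderedRing K] {v w : σ → K} (h : v ⬝ᵥ v = w ⬝ᵥ w) :
    ∃ A ∈ orthogonalGroup σ K, A *ᵥ v = w ∧
      ∀ u, v ⬝ᵥ u = 0 → w ⬝ᵥ u = 0 → A *ᵥ u = u :=
  ⟨householder (v - w), householder_mem_orthogonalGroup _, householder_sub_mulVec h,
    fun u hv hw => by simp [householder_mulVec, sub_dotProduct, hv, hw]⟩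

lemma polyLaplacian_linearSubst {R : Type*} [CommRing R] {A : Matrix σ σ R}
    (hA : A ∈ orthogonalGroup σ R) (p : MvPolynomial σ R) :
    polyLaplacian σ R (linearSubst A p) = linearSubst A (polyLaplacian σ R p) := by
  have hrows (k l : σ) : ∑ i, A k i * A l i = if k = l then 1 else 0 := by
    simpa [mul_apply, one_apply] using congrFun₂ ((mem_orthogonalGroup_iff _ _).1 hA) k l
  calc polyLaplacian σ R (linearSubst A p)
      = ∑ i, ∑ k, ∑ l, (A k i * A l i) • linearSubst A (pderiv l (pderiv k p)) := by
        simp only [polyLaplacian_apply, pderiv_linearSubst, map_sum, Derivation.map_smul,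
          Finset.smul_sum, smul_smul]
    _ = ∑ k, ∑ l, (∑ i, A k i * A l i) • linearSubst A (pderiv l (pderiv k p)) := by
        rw [Finset.sum_comm]
        refine Finset.sum_congr rfl fun k _ => ?_
        rw [Finset.sum_comm]
        simp only [Finset.sum_smul]
    _ = linearSubst A (polyLaplacian σ R p) := by
        simp [hrows, polyLaplacian_apply]

lemma linearSubst_mem_harmonicSubmodule {R : Type*} [CommRing R] {A : Matrix σ σ R}
    (hA : A ∈ orthogonalGroup σ R) {n : ℕ} {p : MvPolynomial σ R}
    (hp : p ∈ harmonicSubmodule σ R n) : linearSubst A p ∈ harmonicSubmodule σ R n := by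
  obtain ⟨hhom, hlap⟩ := mem_harmonicSubmodule.1 hp
  exact mem_harmonicSubmodule.2
    ⟨isHomogeneous_linearSubst A hhom, by rw [polyLaplacian_linearSubst hA, hlap, map_zero]⟩

end OrthogonalGroup

section HomogeneousEval

variable {σ R : Type*} [CommSemiring R]

lemma eval_smul_of_isHomogeneous {n : ℕ} {p : MvPolynomial σ R} (hp : p.IsHomogeneous n) (r : R)
    (v : σ → R) : eval (r • v) p = r ^ n * eval v p := by
  rw [eval_eq, eval_eq, Finset.mul_sum]
  refine Finset.sum_congr rfl fun d hd => ?_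
  rw [hp.degree_eq_sum_deg_support hd]
  simp only [Pi.smul_apply, smul_eq_mul, mul_pow, Finset.prod_mul_distrib,
    Finset.prod_pow_eq_pow_sum]
  ring

lemma eval_pderiv_single_one [Finite σ] [DecidableEq σ] {n : ℕ} {p : MvPolynomial σ R}
    (hp : p.IsHomogeneous n) (k : σ) :
    eval (Pi.single k 1) (pderiv k p) = n * eval (Pi.single k 1) p := by
  have := Fintype.ofFinite σ
  simpa [Pi.single_apply] using congrArg (eval (Pi.single k 1)) hp.sum_X_mul_pderiv

lemma notMem_vars_of_pderiv_eq_zero [CharZero R] [NoZeroDivisors R] {k : σ} {p : MvPolynomial σ R}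
    (hp : pderiv k p = 0) : k ∉ p.vars := by
  classical
  rw [mem_vars_iff_mem_support]
  rintro ⟨d, hd, hkd⟩
  have hdk : d - Finsupp.single k 1 + Finsupp.single k 1 = d :=
    tsub_add_cancel_of_le (Finsupp.single_le_iff.2
      (Nat.one_le_iff_ne_zero.2 (Finsupp.mem_support_iff.1 hkd)))
  have hcoeff := congrArg (coeff (d - Finsupp.single k 1)) hp
  rw [coeff_pderiv, hdk, coeff_zero] at hcoeff
  exact (mul_ne_zero (mem_support_iff.1 hd) (Nat.cast_add_one_ne_zero _)) hcoeff

lemma eval_update_of_pderiv_eq_zero [DecidableEq σ] [CharZero R] [NoZeroDivisors R] {k : σ}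
    {p : MvPolynomial σ R} (hp : pderiv k p = 0) (v : σ → R) (a : R) :
    eval (Function.update v k a) p = eval v p := by
  refine eval₂Hom_congr' rfl (fun i hi _ => ?_) rfl
  refine Function.update_of_ne ?_ a v
  rintro rfl
  exact notMem_vars_of_pderiv_eq_zero hp hi

lemma sum_X_sq_dvd_of_radial {s : Finset σ} {n : ℕ} (hn : n ≠ 0) {p : MvPolynomial σ ℝ}
    (hp : p.IsHomogeneous n)
    (hrad : ∀ v w : σ → ℝ, ∑ i ∈ s, v i ^ 2 = ∑ i ∈ s, w i ^ 2 → eval v p = eval w p) :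
    ∑ i ∈ s, X i ^ 2 ∣ p := by
  classical
  obtain rfl | ⟨j, hj⟩ := s.eq_empty_or_nonempty
  · have hzero : p = 0 := MvPolynomial.funext fun v => by
      rw [hrad v ((0 : ℝ) • v) (by simp), eval_smul_of_isHomogeneous hp, zero_pow hn, zero_mul,
        map_zero]
    simp [hzero]
  obtain ⟨m, rfl⟩ | hodd := n.even_or_odd
  · have hpow : p = C (eval (Pi.single j 1) p) * (∑ i ∈ s, X i ^ 2) ^ m := by
      refine MvPolynomial.funext fun v => ?_
      set r := √(∑ i ∈ s, v i ^ 2)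
      have hr : r ^ 2 = ∑ i ∈ s, v i ^ 2 := Real.sq_sqrt (Finset.sum_nonneg fun i _ => sq_nonneg _)
      have hsum : ∑ i ∈ s, v i ^ 2 = ∑ i ∈ s, (r • Pi.single j (1 : ℝ) : σ → ℝ) i ^ 2 := by
        simp [Pi.single_apply, hj, hr]
      rw [hrad v _ hsum, eval_smul_of_isHomogeneous hp, ← two_mul, pow_mul, hr]
      simp [mul_comm]
    rw [hpow]
    exact (dvd_pow_self _ (by omega)).mul_left _
  · have hzero : p = 0 := MvPolynomial.funext fun v => by
      have hneg := hrad v ((-1 : ℝ) • v) (by simp)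
      rw [eval_smul_of_isHomogeneous hp, hodd.neg_one_pow] at hneg
      rw [map_zero]
      linarith
    simp [hzero]

end HomogeneousEval

section Zonal

variable {σ : Type*} [Fintype σ] [DecidableEq σ]

/-- The polynomials that are zonal with respect to the axis `e`: those fixed by every orthogonal
change of variables that fixes `e`. -/
def zonalSubmodule {R : Type*} [CommRing R] (e : σ → R) : Submodule R (MvPolynomial σ R) where
  carrier := {p | ∀ A ∈ orthogonalGroup σ R, A *ᵥ e = e → linearSubst A p = p}
  zero_mem' := fun _ _ _ => map_zero _
  add_mem' := fun hp hq A hA hAe => by rw [map_add, hp A hA hAe, hq A hA hAe]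
  smul_mem' := fun c p hp A hA hAe => by rw [map_smul, hp A hA hAe]

lemma mem_zonalSubmodule {R : Type*} [CommRing R] {e : σ → R} {p : MvPolynomial σ R} :
    p ∈ zonalSubmodule e ↔
      ∀ A ∈ orthogonalGroup σ R, A *ᵥ e = e → linearSubst A p = p :=
  Iff.rfl

lemma pderiv_mem_zonalSubmodule {R : Type*} [CommRing R] {k : σ} {p : MvPolynomial σ R}
    (hp : p ∈ zonalSubmodule (Pi.single k 1)) :
    pderiv k p ∈ zonalSubmodule (Pi.single k (1 : R)) := by
  refine mem_zonalSubmodule.2 fun A hA hAk => ?_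
  have hcol (i : σ) : A i k = if i = k then 1 else 0 := by
    simpa [mulVec_single_one, Pi.single_apply] using congrFun hAk i
  conv_rhs => rw [← hp A hA hAk, pderiv_linearSubst]
  simp [hcol]

lemma eval_eq_of_mem_zonalSubmodule_of_pderiv_eq_zero {k : σ} {p : MvPolynomial σ ℝ}
    (hp : p ∈ zonalSubmodule (Pi.single k 1)) (hpk : pderiv k p = 0) {v w : σ → ℝ}
    (hvw : ∑ i ∈ Finset.univ.erase k, v i ^ 2 = ∑ i ∈ Finset.univ.erase k, w i ^ 2) :
    eval v p = eval w p := by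
  have hdot (u : σ → ℝ) : Function.update u k 0 ⬝ᵥ Function.update u k 0
      = ∑ i ∈ Finset.univ.erase k, u i ^ 2 := by
    rw [dotProduct, ← Finset.add_sum_erase _ _ (Finset.mem_univ k)]
    rw [Function.update_self, mul_zero, zero_add]
    exact Finset.sum_congr rfl fun i hi => by
      rw [Function.update_of_ne (Finset.ne_of_mem_erase hi), sq]
  obtain ⟨A, hA, hAv, hfix⟩ := exists_mem_orthogonalGroup_mulVec_eq
    ((hdot v).trans (hvw.trans (hdot w).symm))
  have hAk : A *ᵥ Pi.single k 1 = Pi.single k 1 := hfix _ (by simp) (by simp)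
  rw [← eval_update_of_pderiv_eq_zero hpk v 0, ← eval_update_of_pderiv_eq_zero hpk w 0, ← hAv,
    ← eval_linearSubst, hp A hA hAk]

lemma eq_zero_of_mem_zonalSubmodule_of_pderiv_eq_zero {k : σ} {n : ℕ} (hn : n ≠ 0)
    {p : MvPolynomial σ ℝ} (hp : p ∈ harmonicSubmodule σ ℝ n)
    (hpz : p ∈ zonalSubmodule (Pi.single k 1)) (hpk : pderiv k p = 0) : p = 0 := by
  obtain ⟨hhom, hlap⟩ := mem_harmonicSubmodule.1 hp
  obtain ⟨q, hq⟩ := sum_X_sq_dvd_of_radial hn hhom fun _ _ =>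
    eval_eq_of_mem_zonalSubmodule_of_pderiv_eq_zero hpz hpk
  have hlap' : ∑ i ∈ Finset.univ.erase k, pderiv i (pderiv i p) = 0 := by
    rwa [polyLaplacian_apply, ← Finset.add_sum_erase _ _ (Finset.mem_univ k), hpk, map_zero,
      zero_add] at hlap
  refine eq_zero_of_fischerForm_self_eq_zero ?_
  nth_rw 1 [hq]
  rw [mul_comm, fischerForm_mul_sum_X_sq, hlap', map_zero]

theorem eq_zero_of_mem_zonalSubmodule_of_eval_eq_zero {k : σ} {n : ℕ} {p : MvPolynomial σ ℝ}
    (hp : p ∈ harmonicSubmodule σ ℝ n) (hpz : p ∈ zonalSubmodule (Pi.single k 1))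
    (hpk : eval (Pi.single k 1) p = 0) : p = 0 := by
  induction n generalizing p with
  | zero =>
    obtain ⟨c, rfl⟩ : ∃ c, p = C c := ⟨_, totalDegree_eq_zero_iff_eq_C.1
      ((totalDegree_zero_iff_isHomogeneous σ).2 (mem_harmonicSubmodule.1 hp).1)⟩
    rw [eval_C] at hpk
    rw [hpk, C_0]
  | succ n ih =>
    refine eq_zero_of_mem_zonalSubmodule_of_pderiv_eq_zero n.succ_ne_zero hp hpz
      (ih (pderiv_mem_harmonicSubmodule k hp) (pderiv_mem_zonalSubmodule hpz) ?_)
    rw [eval_pderiv_single_one (mem_harmonicSubmodule.1 hp).1, hpk, mul_zero]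

lemma exists_eq_smul_of_mem_zonalSubmodule {k : σ} {n : ℕ} {p q : MvPolynomial σ ℝ}
    (hp : p ∈ harmonicSubmodule σ ℝ n) (hpz : p ∈ zonalSubmodule (Pi.single k 1))
    (hpk : eval (Pi.single k 1) p ≠ 0)
    (hq : q ∈ harmonicSubmodule σ ℝ n) (hqz : q ∈ zonalSubmodule (Pi.single k 1)) :
    ∃ c : ℝ, q = c • p := by
  refine ⟨eval (Pi.single k 1) q / eval (Pi.single k 1) p, sub_eq_zero.1 ?_⟩
  refine eq_zero_of_mem_zonalSubmodule_of_eval_eq_zero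
    (Submodule.sub_mem _ hq (Submodule.smul_mem _ _ hp))
    (Submodule.sub_mem _ hqz (Submodule.smul_mem _ _ hpz)) ?_
  rw [map_sub, smul_eval, div_mul_cancel₀ _ hpk, sub_self]

end Zonal

section FischerOrthogonal

lemma finiteDimensional_of_le_homogeneousSubmodule {σ K : Type*} [Finite σ] [Field K] {n : ℕ}
    {W : Submodule K (MvPolynomial σ K)} (hW : W ≤ homogeneousSubmodule σ K n) :
    FiniteDimensional K W :=
  have : FiniteDimensional K (homogeneousSubmodule σ K n) :=
    Module.Finite.of_fg (homogeneousSubmodule_fg σ K n)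
  Submodule.finiteDimensional_of_le hW

variable {σ K : Type*} [Fintype σ] [Field K] [LinearOrder K] [IsStrictOrderedRing K]

lemma fischerForm_restrict_nondegenerate (W : Submodule K (MvPolynomial σ K)) :
    ((fischerForm σ K).restrict W).Nondegenerate :=
  LinearMap.BilinForm.nondegenerate_restrict_of_disjoint_orthogonal _ fischerForm_isSymm.isRefl <|
    Submodule.disjoint_def.2 fun p hp hp' => eq_zero_of_fischerForm_self_eq_zero (hp' p hp)

lemma exists_fischerForm_eq (W : Submodule K (MvPolynomial σ K)) [FiniteDimensional K W]
    (φ : MvPolynomial σ K →ₗ[K] K) : ∃ w ∈ W, ∀ q ∈ W, fischerForm σ K w q = φ q := by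
  have hnondeg := fischerForm_restrict_nondegenerate W
  let w := (((fischerForm σ K).restrict W).toDual hnondeg).symm (φ ∘ₗ W.subtype)
  exact ⟨w, w.2, fun q hq => LinearMap.BilinForm.apply_toDual_symm_apply (hB := hnondeg)
    (φ ∘ₗ W.subtype) ⟨q, hq⟩⟩

lemma sup_orthogonal_fischerForm_eq_top (W : Submodule K (MvPolynomial σ K))
    [FiniteDimensional K W] : W ⊔ (fischerForm σ K).orthogonal W = ⊤ := by
  refine eq_top_iff.2 fun p _ => ?_
  obtain ⟨w, hw, hrep⟩ := exists_fischerForm_eq W (fischerForm σ K p)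
  refine Submodule.mem_sup.2 ⟨w, hw, p - w, fun q hq => ?_, add_sub_cancel w p⟩
  rw [fischerForm_isSymm.eq, LinearMap.map_sub₂, hrep q hq, sub_self]

end FischerOrthogonal

section InvariantSubspaces

variable {σ : Type*} [Fintype σ] [DecidableEq σ]

/-- A space of polynomials is orthogonally invariant if it is stable under all orthogonal changes of
variables. -/
def IsOrthogonallyInvariant {R : Type*} [CommRing R] (W : Submodule R (MvPolynomial σ R)) : Prop :=
  ∀ A ∈ orthogonalGroup σ R, ∀ p ∈ W, linearSubst A p ∈ W

lemma isOrthogonallyInvariant_harmonicSubmodule {R : Type*} [CommRing R] (n : ℕ) :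
    IsOrthogonallyInvariant (harmonicSubmodule σ R n) :=
  fun _ hA _ hp => linearSubst_mem_harmonicSubmodule hA hp

lemma IsOrthogonallyInvariant.orthogonal {R : Type*} [CommRing R]
    {W : Submodule R (MvPolynomial σ R)} (hW : IsOrthogonallyInvariant W) :
    IsOrthogonallyInvariant ((fischerForm σ R).orthogonal W) := by
  intro A hA p hp q hq
  rw [← transpose_transpose A, ← fischerForm_linearSubst_left]
  exact hp _ (hW _ (transpose_mem_orthogonalGroup hA) q hq)

lemma IsOrthogonallyInvariant.inf {R : Type*} [CommRing R] {V W : Submodule R (MvPolynomial σ R)}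
    (hV : IsOrthogonallyInvariant V) (hW : IsOrthogonallyInvariant W) :
    IsOrthogonallyInvariant (V ⊓ W) :=
  fun A hA p hp => ⟨hV A hA p hp.1, hW A hA p hp.2⟩

lemma mem_zonalSubmodule_of_fischerForm_eq_eval {K : Type*} [CommRing K] [LinearOrder K]
    [IsStrictOrderedRing K] {W : Submodule K (MvPolynomial σ K)}
    (hW : IsOrthogonallyInvariant W) {e : σ → K} {w : MvPolynomial σ K} (hw : w ∈ W)
    (hrep : ∀ q ∈ W, fischerForm σ K w q = eval e q) : w ∈ zonalSubmodule e := by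
  refine mem_zonalSubmodule.2 fun A hA hAe => ?_
  have hsame (q : MvPolynomial σ K) (hq : q ∈ W) :
      fischerForm σ K (linearSubst A w) q = fischerForm σ K w q := by
    rw [fischerForm_linearSubst_left, hrep _ (hW _ (transpose_mem_orthogonalGroup hA) q hq),
      eval_linearSubst, transpose_mulVec_eq_of_mulVec_eq hA hAe, hrep q hq]
  refine sub_eq_zero.1 (eq_zero_of_fischerForm_self_eq_zero ?_)
  rw [LinearMap.map_sub₂, hsame _ (W.sub_mem (hW A hA w hw) hw), sub_self]

lemma exists_eval_mulVec_single_ne_zero (k : σ) {n : ℕ} {p : MvPolynomial σ ℝ}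
    (hp : p.IsHomogeneous n) (hp0 : p ≠ 0) :
    ∃ A ∈ orthogonalGroup σ ℝ, eval (A *ᵥ Pi.single k 1) p ≠ 0 := by
  obtain ⟨v, hv⟩ : ∃ v, eval v p ≠ 0 := by
    by_contra! hzero
    exact hp0 (MvPolynomial.funext fun v => by rw [hzero v, map_zero])
  set r := √(v ⬝ᵥ v)
  have hr : (r • Pi.single k 1 : σ → ℝ) ⬝ᵥ (r • Pi.single k 1) = v ⬝ᵥ v := by
    have hnonneg : 0 ≤ v ⬝ᵥ v := Finset.sum_nonneg fun i _ => mul_self_nonneg (v i)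
    simp [r, Real.mul_self_sqrt hnonneg]
  obtain ⟨A, hA, hAv, -⟩ := exists_mem_orthogonalGroup_mulVec_eq hr
  rw [← hAv, mulVec_smul, eval_smul_of_isHomogeneous hp] at hv
  exact ⟨A, hA, right_ne_zero_of_mul hv⟩

theorem IsOrthogonallyInvariant.exists_mem_zonalSubmodule {n : ℕ}
    {W : Submodule ℝ (MvPolynomial σ ℝ)} (hW : IsOrthogonallyInvariant W)
    (hWn : W ≤ homogeneousSubmodule σ ℝ n) (hne : W ≠ ⊥) (k : σ) :
    ∃ w ∈ W, w ∈ zonalSubmodule (Pi.single k 1) ∧ eval (Pi.single k 1) w ≠ 0 := by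
  have := finiteDimensional_of_le_homogeneousSubmodule hWn
  obtain ⟨w, hw, hrep⟩ : ∃ w ∈ W, ∀ q ∈ W, fischerForm σ ℝ w q = eval (Pi.single k 1) q := by
    simpa [coe_aeval_eq_eval] using exists_fischerForm_eq W (aeval (Pi.single k 1)).toLinearMap
  refine ⟨w, hw, mem_zonalSubmodule_of_fischerForm_eq_eval hW hw hrep, fun hwk => ?_⟩
  obtain ⟨p, hp, hp0⟩ := W.ne_bot_iff.1 hne
  obtain ⟨A, hA, hAp⟩ := exists_eval_mulVec_single_ne_zero k (hWn hp) hp0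
  have hw0 : w = 0 := eq_zero_of_fischerForm_self_eq_zero (by rw [hrep w hw, hwk])
  apply hAp
  rw [← eval_linearSubst, ← hrep _ (hW A hA p hp), hw0, map_zero, LinearMap.zero_apply]

theorem IsOrthogonallyInvariant.eq_harmonicSubmodule [Nonempty σ] {n : ℕ}
    {W : Submodule ℝ (MvPolynomial σ ℝ)} (hW : IsOrthogonallyInvariant W)
    (hWn : W ≤ harmonicSubmodule σ ℝ n) (hne : W ≠ ⊥) : W = harmonicSubmodule σ ℝ n := by
  obtain ⟨k⟩ := ‹Nonempty σ›
  set U := (fischerForm σ ℝ).orthogonal W ⊓ harmonicSubmodule σ ℝ n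
  have hU : U = ⊥ := by
    by_contra hUne
    have hUinv : IsOrthogonallyInvariant U :=
      hW.orthogonal.inf (isOrthogonallyInvariant_harmonicSubmodule n)
    obtain ⟨w, hw, hwz, hwk⟩ := hW.exists_mem_zonalSubmodule (hWn.trans inf_le_left) hne k
    obtain ⟨u, hu, huz, huk⟩ :=
      hUinv.exists_mem_zonalSubmodule (inf_le_right.trans inf_le_left) hUne k
    obtain ⟨c, rfl⟩ := exists_eq_smul_of_mem_zonalSubmodule hu.2 huz huk (hWn hw) hwz
    have hself : fischerForm σ ℝ (c • u) (c • u) = 0 := (U.smul_mem c hu).1 _ hw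
    exact hwk (by rw [eq_zero_of_fischerForm_self_eq_zero hself, map_zero])
  have := finiteDimensional_of_le_homogeneousSubmodule (hWn.trans inf_le_left)
  calc W = W ⊔ U := by rw [hU, sup_bot_eq]
    _ = (W ⊔ (fischerForm σ ℝ).orthogonal W) ⊓ harmonicSubmodule σ ℝ n :=
      (sup_inf_assoc_of_le _ hWn).symm
    _ = harmonicSubmodule σ ℝ n := by rw [sup_orthogonal_fischerForm_eq_top, top_inf_eq]

end InvariantSubspaces

section EquivariantEndomorphisms

variable {σ : Type*} [Fintype σ] [DecidableEq σ] {n : ℕ}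

/-- An endomorphism of the space of harmonic polynomials is orthogonally equivariant if it commutes
with all orthogonal changes of variables. The image of `p` under `A` is given as a second element
`q` of the space, so that `f` can be applied to it. -/
def IsOrthogonallyEquivariant {R : Type*} [CommRing R]
    (f : harmonicSubmodule σ R n →ₗ[R] harmonicSubmodule σ R n) : Prop :=
  ∀ A ∈ orthogonalGroup σ R, ∀ p q : harmonicSubmodule σ R n,
    (q : MvPolynomial σ R) = linearSubst A p → (f q : MvPolynomial σ R) = linearSubst A (f p)

lemma IsOrthogonallyEquivariant.apply_mem_zonalSubmodule {R : Type*} [CommRing R]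
    {f : harmonicSubmodule σ R n →ₗ[R] harmonicSubmodule σ R n} (hf : IsOrthogonallyEquivariant f)
    {e : σ → R} {p : harmonicSubmodule σ R n} (hp : (p : MvPolynomial σ R) ∈ zonalSubmodule e) :
    (f p : MvPolynomial σ R) ∈ zonalSubmodule e :=
  fun A hA hAe => (hf A hA p p (hp A hA hAe).symm).symm

lemma IsOrthogonallyEquivariant.isOrthogonallyInvariant_eigenspace {R : Type*} [CommRing R]
    {f : harmonicSubmodule σ R n →ₗ[R] harmonicSubmodule σ R n} (hf : IsOrthogonallyEquivariant f)
    (c : R) :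
    IsOrthogonallyInvariant
      ((Module.End.eigenspace f c).map (harmonicSubmodule σ R n).subtype) := by
  rintro A hA _ ⟨p, hp, rfl⟩
  have hfp : f p = c • p := Module.End.mem_eigenspace_iff.1 hp
  let q : harmonicSubmodule σ R n := ⟨linearSubst A p, linearSubst_mem_harmonicSubmodule hA p.2⟩
  refine ⟨q, Module.End.mem_eigenspace_iff.2 (Subtype.ext ?_), rfl⟩
  rw [hf A hA p q rfl, hfp, Submodule.coe_smul, map_smul, Submodule.coe_smul]

theorem IsOrthogonallyEquivariant.exists_eq_smul_id [Nonempty σ]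
    {f : harmonicSubmodule σ ℝ n →ₗ[ℝ] harmonicSubmodule σ ℝ n} (hf : IsOrthogonallyEquivariant f) :
    ∃ c : ℝ, f = c • LinearMap.id := by
  obtain ⟨k⟩ := ‹Nonempty σ›
  by_cases hbot : harmonicSubmodule σ ℝ n = ⊥
  · have := Submodule.subsingleton_iff_eq_bot.2 hbot
    exact ⟨0, Subsingleton.elim _ _⟩
  obtain ⟨z, hz, hzz, hzk⟩ :=
    (isOrthogonallyInvariant_harmonicSubmodule n).exists_mem_zonalSubmodule inf_le_left hbot k
  obtain ⟨c, hc⟩ := exists_eq_smul_of_mem_zonalSubmodule hz hzz hzk (f ⟨z, hz⟩).2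
    (hf.apply_mem_zonalSubmodule hzz)
  have hz0 : z ≠ 0 := fun h => hzk (by rw [h, map_zero])
  have hne : (Module.End.eigenspace f c).map (harmonicSubmodule σ ℝ n).subtype ≠ ⊥ :=
    (Submodule.ne_bot_iff _).2
      ⟨z, ⟨⟨z, hz⟩, Module.End.mem_eigenspace_iff.2 (Subtype.ext hc), rfl⟩, hz0⟩
  have htop := (hf.isOrthogonallyInvariant_eigenspace c).eq_harmonicSubmodule
    (Submodule.map_subtype_le _ _) hne
  refine ⟨c, LinearMap.ext fun p => ?_⟩
  obtain ⟨q, hq, hqp⟩ := htop.ge p.2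
  obtain rfl : q = p := Subtype.ext hqp
  exact Module.End.mem_eigenspace_iff.1 hq

end EquivariantEndomorphisms

theorem harmonic_O3_irreducible_and_commutant_general {σ : Type*} [Fintype σ] [DecidableEq σ]
    [Nonempty σ] (n : ℕ) :
    (∀ W : Submodule ℝ (MvPolynomial σ ℝ), W ≤ harmonicSubmodule σ ℝ n →
        (∀ g : orthogonalGroup σ ℝ, ∀ p ∈ W,
          linearSubst ((g⁻¹ : orthogonalGroup σ ℝ) : Matrix σ σ ℝ) p ∈ W) →
        W = ⊥ ∨ W = harmonicSubmodule σ ℝ n) ∧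
    (∀ f : harmonicSubmodule σ ℝ n →ₗ[ℝ] harmonicSubmodule σ ℝ n,
        (∀ (g : orthogonalGroup σ ℝ) (p q : harmonicSubmodule σ ℝ n),
          (q : MvPolynomial σ ℝ)
              = linearSubst ((g⁻¹ : orthogonalGroup σ ℝ) : Matrix σ σ ℝ) (p : MvPolynomial σ ℝ) →
          (f q : MvPolynomial σ ℝ)
              = linearSubst ((g⁻¹ : orthogonalGroup σ ℝ) : Matrix σ σ ℝ)
                  (f p : MvPolynomial σ ℝ)) →
        ∃ c : ℝ, f = c • LinearMap.id) := by
  refine ⟨fun W hWn hW => ?_, fun f hf => ?_⟩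
  · have hinv : IsOrthogonallyInvariant W := fun A hA => by
      simpa only [inv_inv] using hW ⟨A, hA⟩⁻¹
    exact or_iff_not_imp_left.2 (hinv.eq_harmonicSubmodule hWn)
  · have hequiv : IsOrthogonallyEquivariant f := fun A hA => by
      simpa only [inv_inv] using hf ⟨A, hA⟩⁻¹
    exact hequiv.exists_eq_smul_id

/-- For every `n ≥ 0`, the representation of `O(3)` on the space `H_n` of real harmonic
homogeneous polynomials of degree `n` in three variables, acting by `(g·p)(x) = p(g⁻¹x)`,
is irreducible, and every linear endomorphism of `H_n` commuting with the action of every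
`g ∈ O(3)` is a real scalar multiple of the identity. -/
theorem harmonic_O3_irreducible_and_commutant (n : ℕ) :
    (∀ W : Submodule ℝ (MvPolynomial (Fin 3) ℝ), W ≤ harmonicHomog n →
        (∀ (g : Matrix.orthogonalGroup (Fin 3) ℝ), ∀ p ∈ W,
          matrixSubst ((g⁻¹ : Matrix.orthogonalGroup (Fin 3) ℝ) : Matrix (Fin 3) (Fin 3) ℝ) p
            ∈ W) →
        W = ⊥ ∨ W = harmonicHomog n) ∧
    (∀ f : harmonicHomog n →ₗ[ℝ] harmonicHomog n,
        (∀ (g : Matrix.orthogonalGroup (Fin 3) ℝ) (p q : harmonicHomog n),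
          (q : MvPolynomial (Fin 3) ℝ)
              = matrixSubst ((g⁻¹ : Matrix.orthogonalGroup (Fin 3) ℝ)
                  : Matrix (Fin 3) (Fin 3) ℝ) (p : MvPolynomial (Fin 3) ℝ) →
          (f q : MvPolynomial (Fin 3) ℝ)
              = matrixSubst ((g⁻¹ : Matrix.orthogonalGroup (Fin 3) ℝ)
                  : Matrix (Fin 3) (Fin 3) ℝ) (f p : MvPolynomial (Fin 3) ℝ)) →
        ∃ c : ℝ, f = c • LinearMap.id) :=
  harmonic_O3_irreducible_and_commutant_general n
end
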